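/- Cut admissibility: let B be an A-formula and let Δ₁ and Δ₂ be finite multisets of A-formulas. If both ⊢B,Δ₁ and ⊢¬B,Δ₂ are provable in the additive propositional proof system (where ¬B is the negation normal form of the negation of B), then ⊢Δ₁,Δ₂ (the multiset union) is provable. -/

import Mathlib

/-- A-formulas: purely additive propositional formulas built from
conjunction, truth, disjunction, and false (no atoms). -/
inductive AForm : Type
  | conj : AForm → AForm → AForm   -- ∧
  | tt   : AForm                   -- t (unit of ∧)
  | disj : AForm → AForm → AForm   -- ∨
  | ff   : AForm                   -- f (unit of ∨)
  deriving DecidableEq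

/-- Provability of one-sided sequents ⊢Δ (Δ a finite multiset of A-formulas)
in the purely additive propositional proof system. -/
inductive AProv : Multiset AForm → Prop
  | conj {B₁ B₂ : AForm} {Δ : Multiset AForm} :
      AProv (B₁ ::ₘ Δ) → AProv (B₂ ::ₘ Δ) → AProv (AForm.conj B₁ B₂ ::ₘ Δ)
  | tt {Δ : Multiset AForm} : AProv (AForm.tt ::ₘ Δ)
  | disjL {B₁ B₂ : AForm} {Δ : Multiset AForm} :
      AProv (B₁ ::ₘ Δ) → AProv (AForm.disj B₁ B₂ ::ₘ Δ)
  | disjR {B₁ B₂ : AForm} {Δ : Multiset AForm} :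
      AProv (B₂ ::ₘ Δ) → AProv (AForm.disj B₁ B₂ ::ₘ Δ)


/-- Negation normal form: the de Morgan dual of an A-formula. -/
def AForm.neg : AForm → AForm
  | AForm.conj B C => AForm.disj B.neg C.neg
  | AForm.tt       => AForm.ff
  | AForm.disj B C => AForm.conj B.neg C.neg
  | AForm.ff       => AForm.tt

/-- Boolean value of an A-formula. -/
def AForm.val : AForm → Prop
  | AForm.conj B C => B.val ∧ C.val
  | AForm.tt       => True
  | AForm.disj B C => B.val ∨ C.val
  | AForm.ff       => False

theorem AForm.val_neg (B : AForm) : B.neg.val ↔ ¬ B.val := by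
  induction B with
  | conj B C hB hC => simp only [AForm.neg, AForm.val, hB, hC]; tauto
  | tt => simp [AForm.neg, AForm.val]
  | disj B C hB hC => simp only [AForm.neg, AForm.val, hB, hC]; tauto
  | ff => simp [AForm.neg, AForm.val]

theorem AProv.of_val (B : AForm) (Δ : Multiset AForm) (h : B.val) : AProv (B ::ₘ Δ) := by
  induction B with
  | conj B C hB hC => exact AProv.conj (hB h.1) (hC h.2)
  | tt => exact AProv.tt
  | disj B C hB hC =>
    rcases h with h | h
    · exact AProv.disjL (hB h)
    · exact AProv.disjR (hC h)
  | ff => exact h.elim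

theorem AProv.sound {Δ : Multiset AForm} (h : AProv Δ) : ∃ B ∈ Δ, B.val := by
  induction h with
  | conj _ _ h1 h2 =>
    simp only [Multiset.mem_cons, exists_eq_or_imp, AForm.val] at *
    tauto
  | tt => exact ⟨AForm.tt, by simp, trivial⟩
  | disjL _ h1 =>
    simp only [Multiset.mem_cons, exists_eq_or_imp, AForm.val] at *
    tauto
  | disjR _ h1 =>
    simp only [Multiset.mem_cons, exists_eq_or_imp, AForm.val] at *
    tauto

theorem AProv.complete {Δ : Multiset AForm} (h : ∃ B ∈ Δ, B.val) : AProv Δ := by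
  obtain ⟨B, hB, hv⟩ := h
  obtain ⟨Γ, rfl⟩ := Multiset.exists_cons_of_mem hB
  exact AProv.of_val B Γ hv

/-- Cut admissibility: if ⊢B,Δ₁ and ⊢¬B,Δ₂ are provable then ⊢Δ₁,Δ₂ is provable. -/
theorem cut_admissibility (B : AForm) (Δ₁ Δ₂ : Multiset AForm)
    (h₁ : AProv (B ::ₘ Δ₁)) (h₂ : AProv (B.neg ::ₘ Δ₂)) : AProv (Δ₁ + Δ₂) := by
  apply AProv.complete
  have a := h₁.sound
  have b := h₂.sound
  simp only [Multiset.mem_cons, exists_eq_or_imp, AForm.val_neg] at a b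
  simp only [Multiset.mem_add, or_and_right, exists_or]
  rcases a with a | a
  · rcases b with b | b
    · exact absurd a b
    · exact Or.inr b
  · exact Or.inl a
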